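/- arXiv:2503.17387 — 2 statements merged into one kernel-verified Lean document; each statement's English description precedes it below -/
import Mathlib

section
/- Let Γ be a play-once DG game satisfying the normalization: every non-terminal position v has N⁺(v) ⊄ T and |N⁺(v) ∩ T| ≤ 1. Define S = { v ∈ V∖T : N⁺(v) ∩ T ≠ ∅ and a(v) ≻_{i(v)} ∞ } (a(v) being the unique terminal in N⁺(v) ∩ T), W = the set of positions reachable from v₀ by a directed path in the induced subgraph G[V∖S], and Q = the set of vertices of V∖(S ∪ W ∪ T) from which a directed cycle is reachable by a (possibly empty) directed path in the induced subgraph G[V∖(S ∪ W ∪ T)]. If the induced subgraph G[W] is acyclic, then every directed cycle of the induced subgraph G[V∖Q] contains a vertex of S. -/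
/-!
Moves of `G[V∖S]` never lead out of `W`, and none start in `T`, so `W ∪ T` is closed under them.
A cycle cannot leave a closed set, nor enter it from outside: every cycle of `G[V∖S]` lies in
`G[W]` or in `G[V∖(S ∪ W ∪ T)]`. The former is excluded by acyclicity, and a cycle of the latter
consists of vertices of `Q`.
-/

open Classical

/-- A deterministic graphical (DG) game on vertex (position) set `V` with player set `ι`.
`adj` is the move relation of the digraph; terminals are exactly the vertices of
out-degree `0`.  `owner x` is the player controlling position `x` (irrelevant for
terminals), `init` is the initial position, and `pref i x y` means that player `i`
strictly prefers outcome `x` to outcome `y`, where outcomes are encoded as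
`Option V`: `some t` for a terminal `t` and `none` for the infinite outcome `∞`. -/
structure DGGame (V : Type*) (ι : Type*) where
  adj : V → V → Prop
  owner : V → ι
  init : V
  pref : ι → Option V → Option V → Prop

namespace DGGame

variable {V ι : Type*} (Γ : DGGame V ι)

/-- A terminal position: no outgoing moves. -/
def Terminal (x : V) : Prop := ∀ y, ¬ Γ.adj x y

/-- The set of outcomes `A = T ∪ {∞}`. -/
def OutcomeSet : Set (Option V) := {x | x = none ∨ ∃ t, Γ.Terminal t ∧ x = some t}

/-- The preferences of each player form a strict linear order on the outcome set. -/
def PrefOrder : Prop :=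
  ∀ i : ι,
    (∀ x ∈ Γ.OutcomeSet, ¬ Γ.pref i x x) ∧
    (∀ x ∈ Γ.OutcomeSet, ∀ y ∈ Γ.OutcomeSet, ∀ z ∈ Γ.OutcomeSet,
        Γ.pref i x y → Γ.pref i y z → Γ.pref i x z) ∧
    (∀ x ∈ Γ.OutcomeSet, ∀ y ∈ Γ.OutcomeSet, x ≠ y → Γ.pref i x y ∨ Γ.pref i y x)

/-- One step of the play determined by a situation `σ` (stays put at terminals). -/
noncomputable def step (σ : V → V) (x : V) : V :=
  if Γ.Terminal x then x else σ x

/-- The position reached after `n` moves of the play starting at the initial position. -/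
noncomputable def iter (σ : V → V) (n : ℕ) : V := (Γ.step σ)^[n] Γ.init

/-- The outcome `g(σ)` of a situation: the terminal at which the play from the initial
position ends, or `none` (i.e. `∞`) if the play is infinite. -/
noncomputable def outcome (σ : V → V) : Option V :=
  if h : ∃ n, Γ.Terminal (Γ.iter σ n) then some (Γ.iter σ (Nat.find h)) else none

/-- A situation: a choice, for every non-terminal position, of a move from it.
(Values at terminal positions are irrelevant.) -/
def IsSituation (σ : V → V) : Prop := ∀ x, ¬ Γ.Terminal x → Γ.adj x (σ x)

/-- Nash equilibrium in pure stationary strategies: no player `i` can obtain a strictly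
better outcome by changing his own moves only. -/
def IsNE (σ : V → V) : Prop :=
  Γ.IsSituation σ ∧
  ∀ (i : ι) (σ' : V → V), Γ.IsSituation σ' →
    (∀ x, Γ.owner x ≠ i → σ' x = σ x) →
    ¬ Γ.pref i (Γ.outcome σ') (Γ.outcome σ)

/-- A terminal Nash equilibrium: a NE whose outcome is a terminal. -/
def IsTerminalNE (σ : V → V) : Prop := Γ.IsNE σ ∧ ∃ t, Γ.outcome σ = some t

/-- A non-terminal Nash equilibrium: a NE whose outcome is `∞`. -/
def IsNonterminalNE (σ : V → V) : Prop := Γ.IsNE σ ∧ Γ.outcome σ = none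

/-- A terminal DG game: every player prefers every terminal outcome to `∞`. -/
def TerminalGame : Prop := ∀ (i : ι) (t : V), Γ.Terminal t → Γ.pref i (some t) none

/-- A play-once DG game: every player controls exactly one position. -/
def PlayOnce : Prop := ∀ i : ι, {x | ¬ Γ.Terminal x ∧ Γ.owner x = i}.ncard = 1

/-- Reachability by a directed path. -/
def Reaches (x y : V) : Prop := Relation.ReflTransGen Γ.adj x y

end DGGame

namespace DGGame

variable {V ι : Type*}

/-- The set `S`: non-terminal positions `v` having a move to a terminal `a(v)` that the
controlling player prefers to `∞`. -/
def Sset (Γ : DGGame V ι) : Set V :=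
  {x | ¬ Γ.Terminal x ∧
    ∃ t, Γ.adj x t ∧ Γ.Terminal t ∧ Γ.pref (Γ.owner x) (some t) none}

/-- The move relation of the induced subgraph `G[V∖S]`. -/
def adjNS (Γ : DGGame V ι) (x y : V) : Prop :=
  Γ.adj x y ∧ x ∉ Γ.Sset ∧ y ∉ Γ.Sset

/-- The set `W`: positions reachable from the initial position by a directed path in
the induced subgraph `G[V∖S]`. -/
def Wset (Γ : DGGame V ι) : Set V :=
  {x | Γ.init ∉ Γ.Sset ∧ x ∉ Γ.Sset ∧ Relation.ReflTransGen Γ.adjNS Γ.init x}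

/-- The move relation of the induced subgraph `G[W]`. -/
def adjW (Γ : DGGame V ι) (x y : V) : Prop :=
  Γ.adj x y ∧ x ∈ Γ.Wset ∧ y ∈ Γ.Wset

/-- The normalization used for play-once games: every non-terminal position has a
non-terminal out-neighbour (`N⁺(v) ⊄ T`) and at most one terminal out-neighbour. -/
def Normalized (Γ : DGGame V ι) : Prop :=
  ∀ x, ¬ Γ.Terminal x →
    (∃ y, Γ.adj x y ∧ ¬ Γ.Terminal y) ∧ {y | Γ.adj x y ∧ Γ.Terminal y}.ncard ≤ 1

end DGGame

namespace DGGame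

variable {V ι : Type*}

/-- The set `V∖(S ∪ W ∪ T)`. -/
def Yset (Γ : DGGame V ι) : Set V :=
  {x | x ∉ Γ.Sset ∧ x ∉ Γ.Wset ∧ ¬ Γ.Terminal x}

/-- The move relation of the induced subgraph `G[V∖(S ∪ W ∪ T)]`. -/
def adjY (Γ : DGGame V ι) (x y : V) : Prop :=
  Γ.adj x y ∧ x ∈ Γ.Yset ∧ y ∈ Γ.Yset

/-- The set `Q`: vertices of `V∖(S ∪ W ∪ T)` from which a directed cycle is reachable
by a (possibly empty) directed path inside `G[V∖(S ∪ W ∪ T)]`. -/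
def Qset (Γ : DGGame V ι) : Set V :=
  {x | x ∈ Γ.Yset ∧
    ∃ u, Relation.ReflTransGen Γ.adjY x u ∧ Relation.TransGen Γ.adjY u u}

/-- The move relation of the induced subgraph `G[V∖Q]`. -/
def adjQ (Γ : DGGame V ι) (x y : V) : Prop :=
  Γ.adj x y ∧ x ∉ Γ.Qset ∧ y ∉ Γ.Qset

end DGGame

section Induced

variable {α : Type*} {r : α → α → Prop} {s : Set α} {x y : α}

/-- The edge relation of the subgraph induced on `s` by the digraph with edge relation `r`. It is
kept on the whole vertex type, which makes `adjNS`, `adjW` and `adjY` definitionally instances of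
it. -/
def Induced (r : α → α → Prop) (s : Set α) (x y : α) : Prop := r x y ∧ x ∈ s ∧ y ∈ s

theorem transGen_induced_of_mem (hs : ∀ ⦃a b⦄, r a b → a ∈ s → b ∈ s)
    (h : Relation.TransGen r x y) (hx : x ∈ s) : Relation.TransGen (Induced r s) x y := by
  induction h using Relation.TransGen.head_induction_on with
  | single hab => exact .single ⟨hab, hx, hs hab hx⟩
  | head hab _ ih => exact .head ⟨hab, hx, hs hab hx⟩ (ih (hs hab hx))

theorem transGen_induced_compl_of_notMem (hs : ∀ ⦃a b⦄, r a b → a ∈ s → b ∈ s)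
    (h : Relation.TransGen r x y) (hy : y ∉ s) : Relation.TransGen (Induced r sᶜ) x y := by
  induction h with
  | single hab => exact .single ⟨hab, mt (hs hab) hy, hy⟩
  | tail _ hab ih => exact (ih (mt (hs hab) hy)).tail ⟨hab, mt (hs hab) hy, hy⟩

theorem transGen_self_induced_or_compl (hs : ∀ ⦃a b⦄, r a b → a ∈ s → b ∈ s)
    (h : Relation.TransGen r x x) :
    Relation.TransGen (Induced r s) x x ∨ Relation.TransGen (Induced r sᶜ) x x :=
  (Classical.em (x ∈ s)).imp (transGen_induced_of_mem hs h) (transGen_induced_compl_of_notMem hs h)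

theorem transGen_induced_of_closed_walk {k : ℕ} {f : ℕ → α} (hk : 0 < k)
    (hr : ∀ n < k, r (f n) (f (n + 1))) (hclosed : f k = f 0) (hs : ∀ n < k, f n ∈ s) :
    Relation.TransGen (Induced r s) (f 0) (f 0) := by
  have hs_succ : ∀ n < k, f (n + 1) ∈ s := fun n hn => by
    obtain hlt | heq := (Nat.succ_le_of_lt hn).lt_or_eq
    · exact hs _ hlt
    · have hwrap : f (n + 1) = f 0 := (congrArg f heq).trans hclosed
      exact hwrap ▸ hs 0 hk
  have hindex : Relation.TransGen (fun m n => Induced r s (f m) (f n)) 0 k :=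
    transGen_of_succ_of_lt _ (fun n hn => ⟨hr n hn.2, hs n hn.2, hs_succ n hn.2⟩) hk
  have hwalk : Relation.TransGen (Induced r s) (f 0) (f k) :=
    Relation.TransGen.lift f (fun _ _ h => h) _ _ hindex
  rwa [hclosed] at hwalk

end Induced

namespace DGGame

variable {V ι : Type*} {Γ : DGGame V ι} {x y : V}

theorem mem_Wset_of_adjNS (hxy : Γ.adjNS x y) (hx : x ∈ Γ.Wset ∪ {z | Γ.Terminal z}) :
    y ∈ Γ.Wset := by
  obtain ⟨hinit, -, hreach⟩ | hterm := hx
  · exact ⟨hinit, hxy.2.2, hreach.tail hxy⟩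
  · exact absurd hxy.1 (hterm y)

theorem adjW_of_induced_adjNS (h : Induced Γ.adjNS (Γ.Wset ∪ {z | Γ.Terminal z}) x y) :
    Γ.adjW x y :=
  ⟨h.1.1, h.2.1.resolve_right fun hx => hx y h.1.1, mem_Wset_of_adjNS h.1 h.2.1⟩

theorem adjY_of_induced_adjNS (h : Induced Γ.adjNS (Γ.Wset ∪ {z | Γ.Terminal z})ᶜ x y) :
    Γ.adjY x y :=
  have ⟨⟨hadj, hxS, hyS⟩, hx, hy⟩ := h
  ⟨hadj, ⟨hxS, not_or.mp hx⟩, ⟨hyS, not_or.mp hy⟩⟩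

theorem transGen_adjW_or_adjY_of_transGen_adjNS (h : Relation.TransGen Γ.adjNS x x) :
    Relation.TransGen Γ.adjW x x ∨ Relation.TransGen Γ.adjY x x :=
  (transGen_self_induced_or_compl (fun _ _ hab ha => .inl (mem_Wset_of_adjNS hab ha)) h).imp
    (Relation.TransGen.mono (fun _ _ => adjW_of_induced_adjNS) _ _)
    (Relation.TransGen.mono (fun _ _ => adjY_of_induced_adjNS) _ _)

theorem mem_Qset_of_transGen_adjY (h : Relation.TransGen Γ.adjY x x) : x ∈ Γ.Qset :=
  have ⟨_, hadj, _⟩ := Relation.TransGen.head'_iff.mp h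
  ⟨hadj.2.1, x, .refl, h⟩

end DGGame

theorem stmt13_general {V ι : Type*} (Γ : DGGame V ι)
    (hacyc : ¬ ∃ x, Relation.TransGen Γ.adjW x x) {k : ℕ} {f : ℕ → V} (hk : 1 ≤ k)
    (hadj : ∀ n < k, Γ.adjQ (f n) (f (n + 1))) (hclosed : f k = f 0) :
    ∃ n < k, f n ∈ Γ.Sset := by
  by_contra! hS
  have hcycle : Relation.TransGen Γ.adjNS (f 0) (f 0) :=
    transGen_induced_of_closed_walk (s := Γ.Ssetᶜ) hk (fun n hn => (hadj n hn).1) hclosed hS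
  obtain hW | hY := DGGame.transGen_adjW_or_adjY_of_transGen_adjNS hcycle
  · exact hacyc ⟨f 0, hW⟩
  · exact (hadj 0 hk).2.1 (DGGame.mem_Qset_of_transGen_adjY hY)

/-- In a normalized play-once DG game, if the induced subgraph `G[W]` is acyclic, then
every directed cycle `f 0, f 1, …, f k = f 0` of the induced subgraph `G[V∖Q]`
contains a vertex of `S`. -/
theorem stmt13 {V ι : Type*} [Finite V] (Γ : DGGame V ι)
    (hinit : ¬ Γ.Terminal Γ.init) (hpref : Γ.PrefOrder)
    (hpo : Γ.PlayOnce) (hnorm : Γ.Normalized)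
    (hacyc : ¬ ∃ x, Relation.TransGen Γ.adjW x x) :
    ∀ (k : ℕ) (f : ℕ → V), 1 ≤ k →
      (∀ n < k, Γ.adjQ (f n) (f (n + 1))) → f k = f 0 →
      (∀ m < k, ∀ n < k, f m = f n → m = n) →
      ∃ n < k, f n ∈ Γ.Sset :=
  fun _ _ hk hadj hclosed _ => stmt13_general Γ hacyc hk hadj hclosed
end

section
/- Let Γ be a play-once DG game satisfying the normalization: every non-terminal position v has N⁺(v) ⊄ T and |N⁺(v) ∩ T| ≤ 1. Define S = { v ∈ V∖T : N⁺(v) ∩ T ≠ ∅ and a(v) ≻_{i(v)} ∞ } (a(v) being the unique terminal in N⁺(v) ∩ T) and W = the set of positions reachable from v₀ by a directed path in the induced subgraph G[V∖S]. If the induced subgraph G[W] is acyclic, then Γ has a terminal Nash equilibrium, i.e., a Nash equilibrium σ with g(σ) ∈ T. -/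
/-!
The idea is to enlarge the acyclic part of the graph as far as possible and to combine backward
induction on it with threats that lead back to the equilibrium path.

Call a set `r` of moves admissible if it contains all moves from positions outside `S` and all
moves to terminals, and if no `r`-cycle can be `r`-reached from the initial position. Acyclicity of
`G[W]` says that the smallest candidate is admissible; take a maximal admissible `r`. A discarded
move `s → z` then starts in `S`, and `z` `r`-reaches `s` or an `r`-cycle.

Backward induction along `r` from the initial position yields values and optimal moves `τ`; let `c`
be the terminal at which the `τ`-play `P` ends. The equilibrium plays `τ` on `P`. Let `D` be the set
of positions that `r`-reach `P` or an `r`-cycle; its only terminal is `c`. On `D` the equilibrium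
moves along `r` without leaving `D`, and on the remaining `r`-reachable positions it plays `τ`.

Let the owner of `p ∈ P` deviate to `y`. If `r` retains the move, the play still follows `r` from
the initial position, so it ends in `c` or in the value of `y`, which is no better for `p`. If `r`
discards it, then `y ∈ D` and the play stays in `D` forever, so its outcome is `c` or `∞`; but
`p ∈ S`, and `∞` is worse for `p` than `a(p)`, which is no better than `c`.
-/

open Classical

namespace DGGame

open Relation

section Relations

variable {α β : Type*} {r : α → α → Prop} {a b s z : α}

/-- The vertex `a` reaches a directed cycle of `r`. -/
def ReachesCycle (r : α → α → Prop) (a : α) : Prop :=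
  ∃ x, ReflTransGen r a x ∧ TransGen r x x

/-- The digraph `r` with the edge `s → z` added. -/
def insertEdge (r : α → α → Prop) (s z : α) (a b : α) : Prop :=
  r a b ∨ (a = s ∧ b = z)

lemma le_insertEdge (r : α → α → Prop) (s z : α) : r ≤ insertEdge r s z :=
  fun _ _ h => Or.inl h

lemma reflTransGen_or_of_insertEdge (h : ReflTransGen (insertEdge r s z) a b) :
    ReflTransGen r a b ∨ (ReflTransGen r a s ∧ ReflTransGen r z b) := by
  induction h with
  | refl => exact Or.inl .refl
  | tail _ hbc ih =>
    rcases hbc with hbc | ⟨rfl, rfl⟩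
    · exact ih.imp (·.tail hbc) (And.imp_right (·.tail hbc))
    · exact ih.elim (fun h => Or.inr ⟨h, .refl⟩) (fun h => Or.inr ⟨h.1, .refl⟩)

lemma transGen_or_of_insertEdge (h : TransGen (insertEdge r s z) a b) :
    TransGen r a b ∨ (ReflTransGen r a s ∧ ReflTransGen r z b) := by
  obtain ⟨y, hay, hyb⟩ := TransGen.head'_iff.1 h
  rcases hay with hay | ⟨rfl, rfl⟩
  · exact (reflTransGen_or_of_insertEdge hyb).imp (.head' hay) (And.imp_left (.head hay))
  · exact Or.inr ⟨.refl, (reflTransGen_or_of_insertEdge hyb).elim id And.right⟩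

lemma ReachesCycle.of_insertEdge (h : ReachesCycle (insertEdge r s z) a) :
    ReachesCycle r a ∨ ReflTransGen r z s ∨ ReachesCycle r z := by
  obtain ⟨x, hax, hxx⟩ := h
  rcases transGen_or_of_insertEdge hxx with hxx | ⟨hxs, hzx⟩
  · rcases reflTransGen_or_of_insertEdge hax with hax | ⟨-, hzx⟩
    · exact Or.inl ⟨x, hax, hxx⟩
    · exact Or.inr (Or.inr ⟨x, hzx, hxx⟩)
  · exact Or.inr (Or.inl (hzx.trans hxs))

lemma wellFounded_of_not_reachesCycle [Finite α] (h : ¬ ReachesCycle r a) :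
    WellFounded fun y x => ReflTransGen r a x ∧ r x y := by
  let q : α → α → Prop := fun y x => ReflTransGen r a x ∧ TransGen r x y
  have : IsTrans α q := ⟨fun _ _ _ h₁ h₂ => ⟨h₂.1, h₂.2.trans h₁.2⟩⟩
  have : Std.Irrefl q := ⟨fun x hx => h ⟨x, hx⟩⟩
  exact Subrelation.wf (And.imp_right .single) (Finite.wellFounded_of_trans_of_irrefl q)

/-- Here `better v x y` says that the player to move at `v` prefers `x` to `y`, and `payoff` is
collected at the positions without moves. -/
lemma exists_backward_induction (hr : WellFounded (Function.swap r)) {better : α → β → β → Prop}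
    (hbetter : ∀ v, WellFounded (better v)) (payoff : α → β) :
    ∃ val : α → β, (∀ v, (∀ y, ¬ r v y) → val v = payoff v) ∧
      ∀ v, (∃ y, r v y) →
        (∃ y, r v y ∧ val y = val v) ∧ ∀ y, r v y → ¬ better v (val y) (val v) := by
  let values (v : α) (f : ∀ y, r v y → β) : Set β := {x | ∃ y, ∃ h : r v y, f y h = x}
  have values_nonempty {v : α} (h : ∃ y, r v y) (f : ∀ y, r v y → β) : (values v f).Nonempty :=
    let ⟨y, hvy⟩ := h
    ⟨f y hvy, y, hvy, rfl⟩
  let val : α → β := hr.fix fun v f =>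
    if h : ∃ y, r v y then (hbetter v).min (values v f) (values_nonempty h f) else payoff v
  have val_eq (v : α) : val v = if h : ∃ y, r v y then
      (hbetter v).min (values v fun y _ => val y) (values_nonempty h _) else payoff v :=
    hr.fix_eq _ v
  refine ⟨val, fun v hv => by rw [val_eq, dif_neg (not_exists.2 hv)], fun v hv => ?_⟩
  rw [val_eq v, dif_pos hv]
  constructor
  · obtain ⟨y, hvy, hy⟩ := (hbetter v).min_mem (values v fun y _ => val y) (values_nonempty hv _)
    exact ⟨y, hvy, hy⟩
  · exact fun y hvy => (hbetter v).not_lt_min (values v fun y _ => val y) ⟨y, hvy, rfl⟩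

end Relations

variable {V ι : Type*} {Γ : DGGame V ι} {r : V → V → Prop} {σ τ : V → V}

section Outcomes

lemma iter_succ_of_not_terminal {n : ℕ} (h : ¬ Γ.Terminal (Γ.iter σ n)) :
    Γ.iter σ (n + 1) = σ (Γ.iter σ n) := by
  rw [iter, Function.iterate_succ_apply', ← iter, step, if_neg h]

lemma iter_succ_of_terminal {n : ℕ} (h : Γ.Terminal (Γ.iter σ n)) :
    Γ.iter σ (n + 1) = Γ.iter σ n := by
  rw [iter, Function.iterate_succ_apply', ← iter, step, if_pos h]

lemma iter_mem {I : Set V} (h0 : Γ.init ∈ I) (hI : ∀ v ∈ I, ¬ Γ.Terminal v → σ v ∈ I) (n : ℕ) :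
    Γ.iter σ n ∈ I := by
  induction n with
  | zero => exact h0
  | succ n ih =>
    by_cases h : Γ.Terminal (Γ.iter σ n)
    · rwa [iter_succ_of_terminal h]
    · rw [iter_succ_of_not_terminal h]
      exact hI _ ih h

lemma iter_congr (h : ∀ v ∈ Set.range (Γ.iter τ), ¬ Γ.Terminal v → σ v = τ v) :
    Γ.iter σ = Γ.iter τ := by
  funext n
  induction n with
  | zero => rfl
  | succ n ih =>
    by_cases hn : Γ.Terminal (Γ.iter τ n)
    · rw [iter_succ_of_terminal hn, iter_succ_of_terminal (ih ▸ hn), ih]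
    · rw [iter_succ_of_not_terminal hn, iter_succ_of_not_terminal (ih ▸ hn), ih, h _ ⟨n, rfl⟩ hn]

lemma outcome_congr (h : ∀ v ∈ Set.range (Γ.iter τ), ¬ Γ.Terminal v → σ v = τ v) :
    Γ.outcome σ = Γ.outcome τ := by
  simp only [outcome, iter_congr h]

lemma outcome_eq_none_iff : Γ.outcome σ = none ↔ ∀ n, ¬ Γ.Terminal (Γ.iter σ n) := by
  simp [outcome]

lemma outcome_eq_none_or_mem {I : Set V} (h0 : Γ.init ∈ I)
    (hI : ∀ v ∈ I, ¬ Γ.Terminal v → σ v ∈ I) :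
    Γ.outcome σ = none ∨ ∃ t ∈ I, Γ.Terminal t ∧ Γ.outcome σ = some t := by
  unfold outcome
  split_ifs with h
  · exact Or.inr ⟨_, iter_mem h0 hI _, Nat.find_spec h, rfl⟩
  · exact Or.inl rfl

lemma outcome_ne_none_of_not_reachesCycle [Finite V] (hr : ¬ ReachesCycle r Γ.init)
    (hσ : ∀ v, ReflTransGen r Γ.init v → ¬ Γ.Terminal v → r v (σ v)) : Γ.outcome σ ≠ none := by
  rw [Ne, outcome_eq_none_iff]
  intro h
  have reach (n : ℕ) : ReflTransGen r Γ.init (Γ.iter σ n) :=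
    iter_mem (I := {v | ReflTransGen r Γ.init v}) .refl (fun v hv hT => hv.tail (hσ v hv hT)) n
  have descends (n : ℕ) : r (Γ.iter σ n) (Γ.iter σ (n + 1)) :=
    iter_succ_of_not_terminal (h n) ▸ hσ _ (reach n) (h n)
  exact (wellFounded_iff_isEmpty_descending_chain.1 (wellFounded_of_not_reachesCycle hr)).false
    ⟨Γ.iter σ, fun n => ⟨reach n, descends n⟩⟩

lemma exists_outcome_eq_some [Finite V] (hr : ¬ ReachesCycle r Γ.init)
    (hσ : ∀ v, ReflTransGen r Γ.init v → ¬ Γ.Terminal v → r v (σ v)) {I : Set V}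
    (h0 : Γ.init ∈ I)
    (hI : ∀ v ∈ I, ReflTransGen r Γ.init v → ¬ Γ.Terminal v → σ v ∈ I) :
    ∃ t ∈ I, Γ.Terminal t ∧ Γ.outcome σ = some t := by
  obtain ⟨t, ht, hT, hout⟩ := (outcome_eq_none_or_mem (σ := σ)
    (I := {v | v ∈ I ∧ ReflTransGen r Γ.init v}) ⟨h0, .refl⟩
    fun v hv hT => ⟨hI v hv.1 hv.2 hT, hv.2.tail (hσ v hv.2 hT)⟩).resolve_left
      (outcome_ne_none_of_not_reachesCycle hr hσ)
  exact ⟨t, ht.1, hT, hout⟩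

end Outcomes

section Admissible

/-- The moves that every admissible relation retains: those from positions outside `S` and those
to terminals. -/
def baseRel (Γ : DGGame V ι) (a b : V) : Prop :=
  Γ.adj a b ∧ (a ∉ Γ.Sset ∨ Γ.Terminal b)

/-- A set `r` of moves containing `baseRel` such that the initial position `r`-reaches no
`r`-cycle, i.e. along which backward induction from the initial position is possible. -/
structure Admissible (Γ : DGGame V ι) (r : V → V → Prop) : Prop where
  le_adj : r ≤ Γ.adj
  base_le : Γ.baseRel ≤ r
  not_reachesCycle : ¬ ReachesCycle r Γ.init

lemma exists_baseRel {v : V} (hv : ¬ Γ.Terminal v) : ∃ y, Γ.baseRel v y := by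
  by_cases hS : v ∈ Γ.Sset
  · obtain ⟨-, t, hvt, hT, -⟩ := hS
    exact ⟨t, hvt, Or.inr hT⟩
  · obtain ⟨y, hvy⟩ := Classical.not_forall_not.1 hv
    exact ⟨y, hvy, Or.inl hS⟩

lemma not_terminal_of_baseRel {a b : V} (h : TransGen Γ.baseRel a b) : ¬ Γ.Terminal a := by
  obtain ⟨y, hay, -⟩ := TransGen.head'_iff.1 h
  exact fun hT => hT y hay.1

lemma mem_Wset_of_baseRel {a : V} (h : ReflTransGen Γ.baseRel Γ.init a) (hT : ¬ Γ.Terminal a)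
    (hS : a ∉ Γ.Sset) : a ∈ Γ.Wset := by
  induction h with
  | refl => exact ⟨hS, hS, .refl⟩
  | @tail b c _ hbc ih =>
    have hbS : b ∉ Γ.Sset := hbc.2.resolve_right hT
    obtain ⟨hinit, -, hreach⟩ := ih (fun hbT => hbT _ hbc.1) hbS
    exact ⟨hinit, hS, hreach.tail ⟨hbc.1, hbS, hS⟩⟩

lemma transGen_adjW_of_baseRel {a b : V} (ha : ReflTransGen Γ.baseRel Γ.init a)
    (haS : a ∉ Γ.Sset) (h : TransGen Γ.baseRel a b) (hT : ¬ Γ.Terminal b) (hS : b ∉ Γ.Sset) :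
    TransGen Γ.adjW a b := by
  induction h with
  | single hab =>
    exact .single ⟨hab.1, mem_Wset_of_baseRel ha (fun haT => haT _ hab.1) haS,
      mem_Wset_of_baseRel (ha.tail hab) hT hS⟩
  | @tail b c hab hbc ih =>
    have hbT : ¬ Γ.Terminal b := fun hbT => hbT _ hbc.1
    have hbS : b ∉ Γ.Sset := hbc.2.resolve_right hT
    have hb : ReflTransGen Γ.baseRel Γ.init b := ha.trans hab.to_reflTransGen
    exact (ih hbT hbS).tail ⟨hbc.1, mem_Wset_of_baseRel hb hbT hbS,
      mem_Wset_of_baseRel (hb.tail hbc) hT hS⟩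

lemma admissible_baseRel (hacyc : ¬ ∃ x, TransGen Γ.adjW x x) : Γ.Admissible Γ.baseRel where
  le_adj _ _ h := h.1
  base_le := le_rfl
  not_reachesCycle := by
    rintro ⟨x, hx, hxx⟩
    obtain ⟨y, hxy, hyx⟩ := TransGen.head'_iff.1 hxx
    have hyT : ¬ Γ.Terminal y := not_terminal_of_baseRel (hxx.trans_right hyx)
    have hxS : x ∉ Γ.Sset := hxy.2.resolve_right hyT
    exact hacyc ⟨x, transGen_adjW_of_baseRel hx hxS hxx (not_terminal_of_baseRel hxx) hxS⟩

/-- Otherwise, against maximality, the move could be retained as well. -/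
lemma reaches_or_reachesCycle_of_discarded (hr : Maximal Γ.Admissible r) {s z : V}
    (hadj : Γ.adj s z) (hsz : ¬ r s z) : ReflTransGen r z s ∨ ReachesCycle r z := by
  by_contra hz
  have hins : Γ.Admissible (insertEdge r s z) :=
    { le_adj := by
        rintro u v (huv | ⟨rfl, rfl⟩)
        exacts [hr.prop.le_adj _ _ huv, hadj]
      base_le := hr.prop.base_le.trans (le_insertEdge r s z)
      not_reachesCycle := fun h => h.of_insertEdge.elim hr.prop.not_reachesCycle hz }
  exact hsz (hr.le_of_ge hins (le_insertEdge r s z) s z (Or.inr ⟨rfl, rfl⟩))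

end Admissible

section Equilibrium

/-- Values `val` and moves `τ` obtained by backward induction along `r` from the initial position:
on the positions `r`-reachable from it, `τ` moves along `r` and attains `val`, and no move in `r`
has a value that the owner of the position prefers. -/
structure IsBackwardInduction (Γ : DGGame V ι) (r : V → V → Prop) (val : V → Γ.OutcomeSet)
    (τ : V → V) : Prop where
  val_terminal : ∀ v, Γ.Terminal v → (val v : Option V) = some v
  move : ∀ v, ReflTransGen r Γ.init v → ¬ Γ.Terminal v → r v (τ v)
  val_move : ∀ v, ReflTransGen r Γ.init v → ¬ Γ.Terminal v → val (τ v) = val v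
  optimal : ∀ v, ReflTransGen r Γ.init v → ∀ y, r v y →
    ¬ Γ.pref (Γ.owner v) (val y) (val v)

lemma Admissible.exists_isBackwardInduction [Finite V] (hr : Γ.Admissible r)
    (hpref : ∀ i, IsStrictOrder Γ.OutcomeSet (Subrel (Γ.pref i) (· ∈ Γ.OutcomeSet))) :
    ∃ val τ, Γ.IsBackwardInduction r val τ := by
  let payoff (v : V) : Γ.OutcomeSet :=
    if h : Γ.Terminal v then ⟨some v, Or.inr ⟨v, h, rfl⟩⟩ else ⟨none, Or.inl rfl⟩
  obtain ⟨val, val_sink, hval⟩ := exists_backward_induction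
    (r := fun x y => ReflTransGen r Γ.init x ∧ r x y)
    (wellFounded_of_not_reachesCycle hr.not_reachesCycle)
    (fun v => Finite.wellFounded_of_trans_of_irrefl
      (Subrel (Γ.pref (Γ.owner v)) (· ∈ Γ.OutcomeSet))) payoff
  have hτ : ∀ v, ReflTransGen r Γ.init v → ¬ Γ.Terminal v → ∃ y, r v y ∧ val y = val v := by
    intro v hv hT
    obtain ⟨z, hvz⟩ := exists_baseRel hT
    obtain ⟨⟨y, hvy, hy⟩, -⟩ := hval v ⟨z, hv, hr.base_le _ _ hvz⟩
    exact ⟨y, hvy.2, hy⟩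
  have : Nonempty V := ⟨Γ.init⟩
  choose! τ hτ using hτ
  exact ⟨val, τ,
    { val_terminal := fun v hT => by
        rw [val_sink v fun y hvy => hT y (hr.le_adj _ _ hvy.2)]
        simp only [payoff, dif_pos hT]
      move := fun v hv hT => (hτ v hv hT).1
      val_move := fun v hv hT => (hτ v hv hT).2
      optimal := fun v hv y hvy => (hval v ⟨y, hv, hvy⟩).2 y ⟨hv, hvy⟩ }⟩

/-- The set `D` of the proof idea: the positions from which moves in `r` lead to the `τ`-play or
to a cycle of `r`. A deviation that is punished never leaves it. -/
def threatSet (Γ : DGGame V ι) (r : V → V → Prop) (τ : V → V) : Set V :=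
  {v | (∃ p ∈ Set.range (Γ.iter τ), ReflTransGen r v p) ∨ ReachesCycle r v}

lemma range_iter_subset_threatSet : Set.range (Γ.iter τ) ⊆ Γ.threatSet r τ :=
  fun v hv => Or.inl ⟨v, hv, .refl⟩

lemma init_mem_threatSet : Γ.init ∈ Γ.threatSet r τ :=
  range_iter_subset_threatSet ⟨0, rfl⟩

lemma exists_rel_mem_threatSet {v : V} (hv : v ∈ Γ.threatSet r τ)
    (hplay : v ∉ Set.range (Γ.iter τ)) : ∃ y ∈ Γ.threatSet r τ, r v y := by
  rcases hv with ⟨p, hp, hvp⟩ | ⟨x, hvx, hxx⟩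
  · rcases ReflTransGen.cases_head hvp with rfl | ⟨y, hvy, hyp⟩
    · exact absurd hp hplay
    · exact ⟨y, Or.inl ⟨p, hp, hyp⟩, hvy⟩
  · obtain ⟨y, hvy, hyx⟩ := TransGen.head'_iff.1 (hxx.trans_right hvx)
    exact ⟨y, Or.inr ⟨x, hyx, hxx⟩, hvy⟩

lemma mem_range_iter_of_terminal (hr : r ≤ Γ.adj) {t : V} (ht : t ∈ Γ.threatSet r τ)
    (hT : Γ.Terminal t) : t ∈ Set.range (Γ.iter τ) := by
  by_contra hplay
  obtain ⟨y, -, hty⟩ := exists_rel_mem_threatSet ht hplay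
  exact hT y (hr _ _ hty)

/-- `y` is the successor of `v` in a threat strategy: on the `τ`-play and outside the threat set it
is `τ v`, and from the rest of the threat set it stays in the threat set. -/
structure IsThreatMove (Γ : DGGame V ι) (r : V → V → Prop) (τ : V → V) (v y : V) : Prop where
  adj : Γ.adj v y
  eq_on_play : v ∈ Set.range (Γ.iter τ) → y = τ v
  mem_threatSet : v ∈ Γ.threatSet r τ → y ∈ Γ.threatSet r τ
  rel : ReflTransGen r Γ.init v → r v y
  eq_off_threatSet : ReflTransGen r Γ.init v → v ∉ Γ.threatSet r τ → y = τ v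

/-- The situations all of whose moves are threat moves. -/
def IsThreatProfile (Γ : DGGame V ι) (r : V → V → Prop) (τ σ : V → V) : Prop :=
  ∀ v, ¬ Γ.Terminal v → Γ.IsThreatMove r τ v (σ v)

variable {val : V → Γ.OutcomeSet}

namespace IsBackwardInduction

lemma mem_play (hτ : Γ.IsBackwardInduction r val τ) {v : V} (hv : v ∈ Set.range (Γ.iter τ)) :
    ReflTransGen r Γ.init v ∧ val v = val Γ.init := by
  obtain ⟨n, rfl⟩ := hv
  exact iter_mem (I := {v | ReflTransGen r Γ.init v ∧ val v = val Γ.init}) ⟨.refl, rfl⟩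
    (fun v hv hT => ⟨hv.1.tail (hτ.move v hv.1 hT), (hτ.val_move v hv.1 hT).trans hv.2⟩) n

lemma some_eq_val_init (hτ : Γ.IsBackwardInduction r val τ) (hr : r ≤ Γ.adj) {t : V}
    (ht : t ∈ Γ.threatSet r τ) (hT : Γ.Terminal t) : some t = (val Γ.init : Option V) := by
  rw [← (hτ.mem_play (mem_range_iter_of_terminal hr ht hT)).2, hτ.val_terminal t hT]

lemma outcome_eq [Finite V] (hτ : Γ.IsBackwardInduction r val τ)
    (hr : ¬ ReachesCycle r Γ.init) : Γ.outcome τ = val Γ.init := by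
  obtain ⟨t, ht, hT, hout⟩ := exists_outcome_eq_some hr hτ.move
    (I := {v | val v = val Γ.init}) rfl fun v hv hreach hT => (hτ.val_move v hreach hT).trans hv
  rw [hout, ← hτ.val_terminal t hT, ht]

lemma exists_isThreatMove (hτ : Γ.IsBackwardInduction r val τ) (hr : r ≤ Γ.adj) {v : V}
    (hT : ¬ Γ.Terminal v) : ∃ y, Γ.IsThreatMove r τ v y := by
  by_cases hplay : v ∈ Set.range (Γ.iter τ)
  · have hmove : r v (τ v) := hτ.move v (hτ.mem_play hplay).1 hT
    obtain ⟨n, rfl⟩ := hplay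
    exact ⟨τ _, hr _ _ hmove, fun _ => rfl,
      fun _ => range_iter_subset_threatSet ⟨n + 1, iter_succ_of_not_terminal hT⟩,
      fun _ => hmove, fun _ _ => rfl⟩
  by_cases hD : v ∈ Γ.threatSet r τ
  · obtain ⟨y, hy, hvy⟩ := exists_rel_mem_threatSet hD hplay
    exact ⟨y, hr _ _ hvy, fun h => absurd h hplay, fun _ => hy, fun _ => hvy,
      fun _ h => absurd hD h⟩
  by_cases hreach : ReflTransGen r Γ.init v
  · have hmove : r v (τ v) := hτ.move v hreach hT
    exact ⟨τ v, hr _ _ hmove, fun _ => rfl, fun h => absurd h hD, fun _ => hmove, fun _ _ => rfl⟩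
  · obtain ⟨y, hvy⟩ := Classical.not_forall_not.1 hT
    exact ⟨y, hvy, fun h => absurd h hplay, fun h => absurd h hD, fun h => absurd h hreach,
      fun h => absurd h hreach⟩

lemma exists_isThreatProfile (hτ : Γ.IsBackwardInduction r val τ) (hr : r ≤ Γ.adj) :
    ∃ σ, Γ.IsThreatProfile r τ σ := by
  have : Nonempty V := ⟨Γ.init⟩
  choose! σ hσ using fun (v : V) (hT : ¬ Γ.Terminal v) => hτ.exists_isThreatMove hr hT
  exact ⟨σ, hσ⟩

end IsBackwardInduction

variable {σ' : V → V} {p : V}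

lemma outcome_of_retained_deviation [Finite V] (hr : Γ.Admissible r)
    (hτ : Γ.IsBackwardInduction r val τ) (hσ : Γ.IsThreatProfile r τ σ)
    (hσ' : ∀ v, ¬ Γ.Terminal v → v ≠ p → σ' v = σ v) (hp : r p (σ' p)) :
    Γ.outcome σ' = val Γ.init ∨ Γ.outcome σ' = val (σ' p) := by
  have hmove : ∀ v, ReflTransGen r Γ.init v → ¬ Γ.Terminal v → r v (σ' v) := by
    intro v hv hT
    by_cases hvp : v = p
    · exact hvp ▸ hp
    · exact hσ' v hT hvp ▸ (hσ v hT).rel hv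
  obtain ⟨t, ht, hT, hout⟩ := exists_outcome_eq_some hr.not_reachesCycle hmove
    (I := {v | v ∈ Γ.threatSet r τ ∨ val v = val (σ' p)}) (Or.inl init_mem_threatSet) (by
      intro v hv hreach hT
      by_cases hvp : v = p
      · exact Or.inr (hvp ▸ rfl)
      rw [hσ' v hT hvp]
      by_cases hD : v ∈ Γ.threatSet r τ
      · exact Or.inl ((hσ v hT).mem_threatSet hD)
      · refine Or.inr ?_
        rw [(hσ v hT).eq_off_threatSet hreach hD, hτ.val_move v hreach hT, hv.resolve_left hD])
  rw [hout]
  refine ht.imp (hτ.some_eq_val_init hr.le_adj · hT) fun hval => ?_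
  rw [← hval, hτ.val_terminal t hT]

lemma outcome_of_punished_deviation (hr : r ≤ Γ.adj) (hτ : Γ.IsBackwardInduction r val τ)
    (hσ : Γ.IsThreatProfile r τ σ) (hσ' : ∀ v, ¬ Γ.Terminal v → v ≠ p → σ' v = σ v)
    (hp : σ' p ∈ Γ.threatSet r τ) : Γ.outcome σ' = none ∨ Γ.outcome σ' = val Γ.init := by
  have stays : ∀ v ∈ Γ.threatSet r τ, ¬ Γ.Terminal v → σ' v ∈ Γ.threatSet r τ := by
    intro v hv hT
    by_cases hvp : v = p
    · exact hvp ▸ hp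
    · exact hσ' v hT hvp ▸ (hσ v hT).mem_threatSet hv
  refine (outcome_eq_none_or_mem init_mem_threatSet stays).imp_right ?_
  rintro ⟨t, ht, hT, hout⟩
  rw [hout, hτ.some_eq_val_init hr ht hT]

lemma not_pref_none_val_init (hr : Γ.baseRel ≤ r)
    (htrans : IsTrans Γ.OutcomeSet (Subrel (Γ.pref (Γ.owner p)) (· ∈ Γ.OutcomeSet)))
    (hτ : Γ.IsBackwardInduction r val τ) (hplay : p ∈ Set.range (Γ.iter τ)) (hS : p ∈ Γ.Sset) :
    ¬ Γ.pref (Γ.owner p) none (val Γ.init) := by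
  intro hnone
  obtain ⟨-, t, hpt, hT, ht⟩ := hS
  obtain ⟨hreach, hval⟩ := hτ.mem_play hplay
  have hopt : ¬ Γ.pref (Γ.owner p) (some t) (val Γ.init) := by
    rw [← hval, ← hτ.val_terminal t hT]
    exact hτ.optimal p hreach t (hr _ _ ⟨hpt, Or.inr hT⟩)
  exact hopt (htrans.trans ⟨some t, Or.inr ⟨t, hT, rfl⟩⟩ ⟨none, Or.inl rfl⟩ (val Γ.init) ht hnone)

lemma IsThreatProfile.not_pref_of_deviation [Finite V] (hσ : Γ.IsThreatProfile r τ σ)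
    (hr : Maximal Γ.Admissible r)
    (hpref : IsStrictOrder Γ.OutcomeSet (Subrel (Γ.pref (Γ.owner p)) (· ∈ Γ.OutcomeSet)))
    (hτ : Γ.IsBackwardInduction r val τ) (hplay : p ∈ Set.range (Γ.iter τ))
    (hadj : Γ.adj p (σ' p)) (hσ' : ∀ v, ¬ Γ.Terminal v → v ≠ p → σ' v = σ v) :
    ¬ Γ.pref (Γ.owner p) (Γ.outcome σ') (val Γ.init) := by
  have hirrefl : ¬ Γ.pref (Γ.owner p) (val Γ.init) (val Γ.init) := hpref.irrefl (val Γ.init)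
  by_cases hp : r p (σ' p)
  · obtain ⟨hreach, hval⟩ := hτ.mem_play hplay
    rcases outcome_of_retained_deviation hr.prop hτ hσ hσ' hp with hout | hout
    · rwa [hout]
    · rw [hout, ← hval]
      exact hτ.optimal p hreach _ hp
  · have hS : p ∈ Γ.Sset := by
      by_contra hS
      exact hp (hr.prop.base_le _ _ ⟨hadj, Or.inl hS⟩)
    have hD : σ' p ∈ Γ.threatSet r τ :=
      (reaches_or_reachesCycle_of_discarded hr hadj hp).imp_left fun h => ⟨p, hplay, h⟩
    rcases outcome_of_punished_deviation hr.prop.le_adj hτ hσ hσ' hD with hout | hout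
    · rw [hout]
      exact not_pref_none_val_init hr.prop.base_le hpref.toIsTrans hτ hplay hS
    · rwa [hout]

lemma IsThreatProfile.isTerminalNE [Finite V] (hσ : Γ.IsThreatProfile r τ σ)
    (hr : Maximal Γ.Admissible r)
    (hpref : ∀ i, IsStrictOrder Γ.OutcomeSet (Subrel (Γ.pref i) (· ∈ Γ.OutcomeSet)))
    (howner : Set.InjOn Γ.owner {x | ¬ Γ.Terminal x}) (hτ : Γ.IsBackwardInduction r val τ) :
    Γ.IsTerminalNE σ := by
  have hcycle : ¬ ReachesCycle r Γ.init := hr.prop.not_reachesCycle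
  have outcome_of_agree {σ' : V → V}
      (h : ∀ v ∈ Set.range (Γ.iter τ), ¬ Γ.Terminal v → σ' v = σ v) :
      Γ.outcome σ' = val Γ.init := by
    rw [outcome_congr fun v hv hT => (h v hv hT).trans ((hσ v hT).eq_on_play hv),
      hτ.outcome_eq hcycle]
  have hout : Γ.outcome σ = val Γ.init := outcome_of_agree fun _ _ _ => rfl
  refine ⟨⟨fun v hT => (hσ v hT).adj, fun i σ' hsit hdev => ?_⟩, Option.ne_none_iff_exists'.1
    (outcome_ne_none_of_not_reachesCycle hcycle fun v hv hT => (hσ v hT).rel hv)⟩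
  rw [hout]
  by_cases hi : ∃ p ∈ Set.range (Γ.iter τ), ¬ Γ.Terminal p ∧ Γ.owner p = i
  · obtain ⟨p, hplay, hT, rfl⟩ := hi
    exact hσ.not_pref_of_deviation hr (hpref _) hτ hplay (hsit p hT)
      fun v hvT hvp => hdev v fun hv => hvp (howner hvT hT hv)
  · rw [outcome_of_agree fun v hv hT => hdev v fun hvi => hi ⟨v, hv, hT, hvi⟩]
    exact (hpref i).irrefl (val Γ.init)

end Equilibrium

lemma PrefOrder.isStrictOrder (h : Γ.PrefOrder) (i : ι) :
    IsStrictOrder Γ.OutcomeSet (Subrel (Γ.pref i) (· ∈ Γ.OutcomeSet)) where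
  irrefl x := (h i).1 x x.2
  trans x y z := (h i).2.1 x x.2 y y.2 z z.2

lemma PlayOnce.injOn_owner (h : Γ.PlayOnce) : Set.InjOn Γ.owner {x | ¬ Γ.Terminal x} := by
  intro x hx y hy hxy
  obtain ⟨p, hp⟩ := Set.ncard_eq_one.1 (h (Γ.owner y))
  have eq_p {v : V} (hv : ¬ Γ.Terminal v ∧ Γ.owner v = Γ.owner y) : v = p := hp.subset hv
  exact (eq_p ⟨hx, hxy⟩).trans (eq_p ⟨hy, rfl⟩).symm

end DGGame

theorem stmt14_general {V ι : Type*} [Finite V] (Γ : DGGame V ι)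
    (hpref : ∀ i, IsStrictOrder Γ.OutcomeSet (Subrel (Γ.pref i) (· ∈ Γ.OutcomeSet)))
    (howner : Set.InjOn Γ.owner {x | ¬ Γ.Terminal x})
    (hacyc : ¬ ∃ x, Relation.TransGen Γ.adjW x x) :
    ∃ σ : V → V, Γ.IsTerminalNE σ := by
  obtain ⟨r, -, hr⟩ := (Set.toFinite {r | Γ.Admissible r}).exists_le_maximal
    (DGGame.admissible_baseRel hacyc)
  obtain ⟨val, τ, hτ⟩ := hr.prop.exists_isBackwardInduction hpref
  obtain ⟨σ, hσ⟩ := hτ.exists_isThreatProfile hr.prop.le_adj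
  exact ⟨σ, hσ.isTerminalNE hr hpref howner hτ⟩

/-- In a normalized play-once DG game, if the induced subgraph `G[W]` is acyclic, then
the game has a terminal Nash equilibrium. -/
theorem stmt14 {V ι : Type*} [Finite V] (Γ : DGGame V ι)
    (hinit : ¬ Γ.Terminal Γ.init) (hpref : Γ.PrefOrder)
    (hpo : Γ.PlayOnce) (hnorm : Γ.Normalized)
    (hacyc : ¬ ∃ x, Relation.TransGen Γ.adjW x x) :
    ∃ σ : V → V, Γ.IsTerminalNE σ :=
  stmt14_general Γ hpref.isStrictOrder hpo.injOn_owner hacyc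
end
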